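/- arXiv:0903.1208 — 5 statements merged into one kernel-verified Lean document; each statement's English description precedes it below -/
import Mathlib

section
/- For all positive real numbers x and y, the function (r,s) ↦ ln G(r,s;x,y) is concave on the region (0,∞) × (0,∞); that is, G(r,s;x,y) is logarithmically concave with respect to (r,s) on (0,∞) × (0,∞). -/
/-!
With `h = giniLogDeriv x y`, the logarithmic derivative of `u ↦ x ^ u + y ^ u`, the fundamental
theorem of calculus gives `log (gini r s x y) = ∫ t in 0..1, h (r + t * (s - r))`, also for `r = s`
(`log_gini_eq_integral`). The argument of `h` is linear in `(r, s)` and stays in `(0, ∞)`, so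
concavity of `h` on `(0, ∞)` suffices. That holds because, with `d = log x - log y`, the
derivative of `h` is `d ^ 2 / (2 + 2 * cosh (d * u))`, which is antitone in `u > 0`.
-/

/-- Gini mean `G(r,s;x,y)`. -/
noncomputable def gini (r s x y : ℝ) : ℝ :=
  if r = s then
    Real.exp ((x ^ r * Real.log x + y ^ r * Real.log y) / (x ^ r + y ^ r))
  else
    ((x ^ s + y ^ s) / (x ^ r + y ^ r)) ^ (1 / (s - r))

/-- The logarithmic derivative of `u ↦ x ^ u + y ^ u` for `x, y > 0`, with `x ^ u` written as
`exp (log x * u)`, which makes it smooth in `u` for all real `x` and `y`. -/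
noncomputable def giniLogDeriv (x y u : ℝ) : ℝ :=
  (Real.exp (Real.log x * u) * Real.log x + Real.exp (Real.log y * u) * Real.log y) /
    (Real.exp (Real.log x * u) + Real.exp (Real.log y * u))

lemma hasDerivAt_exp_const_mul (L u : ℝ) :
    HasDerivAt (fun u : ℝ => Real.exp (L * u)) (Real.exp (L * u) * L) u := by
  simpa using ((hasDerivAt_id u).const_mul L).exp

lemma exp_mul_div_sq_eq (L M u : ℝ) :
    Real.exp (L * u) * Real.exp (M * u) * (L - M) ^ 2 /
      (Real.exp (L * u) + Real.exp (M * u)) ^ 2 =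
    (L - M) ^ 2 / (2 + 2 * Real.cosh ((L - M) * u)) := by
  have hA := Real.exp_pos (L * u)
  have hB := Real.exp_pos (M * u)
  rw [Real.cosh_eq, show (L - M) * u = L * u - M * u by ring, Real.exp_sub,
    show -(L * u - M * u) = M * u - L * u by ring, Real.exp_sub]
  field_simp
  ring

lemma hasDerivAt_giniLogDeriv (x y u : ℝ) :
    HasDerivAt (giniLogDeriv x y)
      ((Real.log x - Real.log y) ^ 2 /
        (2 + 2 * Real.cosh ((Real.log x - Real.log y) * u))) u := by
  have hx := hasDerivAt_exp_const_mul (Real.log x) u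
  have hy := hasDerivAt_exp_const_mul (Real.log y) u
  have hA := Real.exp_pos (Real.log x * u)
  have hB := Real.exp_pos (Real.log y * u)
  have h := ((hx.mul_const (Real.log x)).add (hy.mul_const (Real.log y))).div (hx.add hy)
    (by simp only [Pi.add_apply]; positivity)
  rw [← exp_mul_div_sq_eq]
  refine h.congr_deriv ?_
  simp only [Pi.add_apply]
  congr 1
  ring

lemma continuous_giniLogDeriv (x y : ℝ) : Continuous (giniLogDeriv x y) :=
  continuous_iff_continuousAt.2 fun u => (hasDerivAt_giniLogDeriv x y u).continuousAt

lemma concaveOn_giniLogDeriv (x y : ℝ) :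
    ConcaveOn ℝ (Set.Ioi (0 : ℝ)) (giniLogDeriv x y) := by
  refine AntitoneOn.concaveOn_of_deriv (convex_Ioi 0)
    (continuous_giniLogDeriv x y).continuousOn
    (fun u _ => (hasDerivAt_giniLogDeriv x y u).differentiableAt.differentiableWithinAt) ?_
  rw [interior_Ioi]
  intro u hu v hv huv
  rw [(hasDerivAt_giniLogDeriv x y u).deriv, (hasDerivAt_giniLogDeriv x y v).deriv]
  have hc : Real.cosh ((Real.log x - Real.log y) * u) ≤
      Real.cosh ((Real.log x - Real.log y) * v) := by
    rw [Real.cosh_le_cosh, abs_mul, abs_mul, abs_of_pos (a := u) hu, abs_of_pos (a := v) hv]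
    gcongr
  have := Real.cosh_pos ((Real.log x - Real.log y) * u)
  gcongr

lemma log_gini_eq_integral {x y : ℝ} (hx : 0 < x) (hy : 0 < y) (r s : ℝ) :
    Real.log (gini r s x y) = ∫ t in (0 : ℝ)..1, giniLogDeriv x y (r + t * (s - r)) := by
  unfold gini
  split_ifs with hrs
  · subst hrs
    simp [giniLogDeriv, Real.rpow_def_of_pos hx, Real.rpow_def_of_pos hy]
  · have hsr : s - r ≠ 0 := sub_ne_zero.2 (Ne.symm hrs)
    have hF : ∀ u, HasDerivAt
        (fun u => Real.log (Real.exp (Real.log x * u) + Real.exp (Real.log y * u)))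
        (giniLogDeriv x y u) u := fun u =>
      ((hasDerivAt_exp_const_mul (Real.log x) u).add
        (hasDerivAt_exp_const_mul (Real.log y) u)).log (by simp only [Pi.add_apply]; positivity)
    rw [Real.log_rpow (by positivity), Real.log_div (by positivity) (by positivity)]
    have hd : ∀ t ∈ Set.uIcc (0 : ℝ) 1, HasDerivAt
        (fun t => Real.log (Real.exp (Real.log x * (r + t * (s - r))) +
          Real.exp (Real.log y * (r + t * (s - r)))) / (s - r))
        (giniLogDeriv x y (r + t * (s - r))) t := by
      intro t _
      have hl : HasDerivAt (fun t : ℝ => r + t * (s - r)) (s - r) t := by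
        simpa using ((hasDerivAt_id t).mul_const (s - r)).const_add r
      have h := ((hF (r + t * (s - r))).comp t hl).div_const (s - r)
      rwa [mul_div_cancel_right₀ _ hsr] at h
    rw [intervalIntegral.integral_eq_sub_of_hasDerivAt hd
      (((continuous_giniLogDeriv x y).comp (by fun_prop)).intervalIntegrable _ _)]
    simp only [Real.rpow_def_of_pos hx, Real.rpow_def_of_pos hy, one_mul, zero_mul, add_zero,
      add_sub_cancel]
    ring

theorem gini_log_concaveOn_pos (x y : ℝ) (hx : 0 < x) (hy : 0 < y) :
    ConcaveOn ℝ (Set.Ioi (0 : ℝ) ×ˢ Set.Ioi (0 : ℝ))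
      (fun p : ℝ × ℝ => Real.log (gini p.1 p.2 x y)) := by
  refine ⟨(convex_Ioi 0).prod (convex_Ioi 0), ?_⟩
  rintro ⟨r, s⟩ ⟨hr, hs⟩ ⟨r', s'⟩ ⟨hr', hs'⟩ a b ha hb hab
  simp only [Set.mem_Ioi] at hr hs hr' hs'
  have hi : ∀ r s : ℝ, IntervalIntegrable (fun t => giniLogDeriv x y (r + t * (s - r)))
      MeasureTheory.volume 0 1 := fun r s =>
    ((continuous_giniLogDeriv x y).comp (by fun_prop)).intervalIntegrable _ _
  have hpos : ∀ {r s t : ℝ}, 0 < r → 0 < s → t ∈ Set.Icc (0 : ℝ) 1 → 0 < r + t * (s - r) := by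
    intro r s t hr hs ht
    have h := (convex_Ioi (0 : ℝ)) hr hs (sub_nonneg.2 ht.2) ht.1 (sub_add_cancel 1 t)
    simp only [smul_eq_mul, Set.mem_Ioi] at h
    linarith
  simp only [Prod.smul_mk, Prod.mk_add_mk, log_gini_eq_integral hx hy, smul_eq_mul]
  rw [← intervalIntegral.integral_const_mul, ← intervalIntegral.integral_const_mul,
    ← intervalIntegral.integral_add ((hi r s).const_mul a) ((hi r' s').const_mul b)]
  refine intervalIntegral.integral_mono_on zero_le_one
    (((hi r s).const_mul a).add ((hi r' s').const_mul b)) (hi _ _) fun t ht => ?_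
  have h := (concaveOn_giniLogDeriv x y).2 (hpos hr hs ht) (hpos hr' hs' ht) ha hb hab
  simp only [smul_eq_mul] at h
  refine h.trans_eq (congrArg _ ?_)
  ring
end

section
/- For all positive real numbers x and y with x ≠ y and all real numbers r, s, the function H_{r,s;x,y}(t) = G(r+t, s+t; x, y) is (strictly) increasing on (-∞,∞). -/
/-- `H_{r,s;x,y}(t) = G(r+t, s+t; x, y)`. -/
noncomputable def giniH (r s x y t : ℝ) : ℝ := gini (r + t) (s + t) x y

/-- The logarithmic derivative of `t ↦ x ^ t + y ^ t`: the mean of `log x` and `log y` with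
weights proportional to `x ^ t` and `y ^ t`. -/
noncomputable def weightedLog (x y t : ℝ) : ℝ :=
  (x ^ t * Real.log x + y ^ t * Real.log y) / (x ^ t + y ^ t)

/-- As `t` grows the weight moves towards the larger of `x` and `y`. -/
lemma weightedLog_strictMono {x y : ℝ} (hx : 0 < x) (hy : 0 < y) (hxy : x ≠ y) :
    StrictMono (weightedLog x y) := by
  intro a b hab
  have hxa := Real.rpow_pos_of_pos hx a
  have hya := Real.rpow_pos_of_pos hy a
  have hxb := Real.rpow_pos_of_pos hx b
  have hyb := Real.rpow_pos_of_pos hy b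
  have hxe : x ^ b = x ^ a * x ^ (b - a) := by rw [← Real.rpow_add hx]; congr 1; ring
  have hye : y ^ b = y ^ a * y ^ (b - a) := by rw [← Real.rpow_add hy]; congr 1; ring
  have hprod : 0 < (x ^ (b - a) - y ^ (b - a)) * (Real.log x - Real.log y) := by
    rcases lt_or_gt_of_ne hxy with h | h
    · have h1 := Real.rpow_lt_rpow hx.le h (sub_pos.2 hab)
      have h2 := Real.log_lt_log hx h
      exact mul_pos_of_neg_of_neg (by linarith) (by linarith)
    · have h1 := Real.rpow_lt_rpow hy.le h (sub_pos.2 hab)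
      have h2 := Real.log_lt_log hy h
      exact mul_pos (by linarith) (by linarith)
  unfold weightedLog
  rw [div_lt_div_iff₀ (by positivity) (by positivity)]
  have key := mul_pos (mul_pos hxa hya) hprod
  rw [hxe, hye]
  linarith

lemma hasDerivAt_log_rpow_add_rpow {x y : ℝ} (hx : 0 < x) (hy : 0 < y) (c t : ℝ) :
    HasDerivAt (fun u => Real.log (x ^ (c + u) + y ^ (c + u))) (weightedLog x y (c + t)) t := by
  have hid : HasDerivAt (fun u : ℝ => c + u) 1 t := (hasDerivAt_id t).const_add c
  have hxp := Real.rpow_pos_of_pos hx (c + t)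
  have hyp := Real.rpow_pos_of_pos hy (c + t)
  have hsum : HasDerivAt (fun u => x ^ (c + u) + y ^ (c + u))
      (x ^ (c + t) * Real.log x + y ^ (c + t) * Real.log y) t := by
    have h := (hid.const_rpow hx).add (hid.const_rpow hy)
    rw [mul_one, mul_one, mul_comm (Real.log x), mul_comm (Real.log y)] at h
    exact h
  exact hsum.log (add_pos hxp hyp).ne'

theorem giniH_strictMono (x y : ℝ) (hx : 0 < x) (hy : 0 < y) (hxy : x ≠ y) (r s : ℝ) :
    StrictMono (giniH r s x y) := by
  have hm := weightedLog_strictMono hx hy hxy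
  by_cases hrs : r = s
  · subst hrs
    intro a b hab
    simp only [giniH, gini, if_true]
    exact Real.exp_lt_exp.2 (hm (by linarith))
  · have hH : giniH r s x y = fun t => Real.exp ((Real.log (x ^ (s + t) + y ^ (s + t))
        - Real.log (x ^ (r + t) + y ^ (r + t))) / (s - r)) := by
      funext t
      have hpos (c : ℝ) : 0 < x ^ c + y ^ c :=
        add_pos (Real.rpow_pos_of_pos hx c) (Real.rpow_pos_of_pos hy c)
      have hne : r + t ≠ s + t := fun h => hrs (add_right_cancel h)
      rw [giniH, gini, if_neg hne, Real.rpow_def_of_pos (div_pos (hpos _) (hpos _)),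
        Real.log_div (hpos _).ne' (hpos _).ne', add_sub_add_right_eq_sub, mul_one_div]
    rw [hH]
    refine Real.exp_strictMono.comp (strictMono_of_hasDerivAt_pos (fun t =>
      ((hasDerivAt_log_rpow_add_rpow hx hy s t).sub
        (hasDerivAt_log_rpow_add_rpow hx hy r t)).div_const (s - r)) fun t => ?_)
    rcases lt_or_gt_of_ne hrs with h | h
    · exact div_pos (sub_pos.2 (hm (by linarith))) (by linarith)
    · exact div_pos_of_neg_of_neg (sub_neg.2 (hm (by linarith))) (by linarith)
end

section
/- For all positive real numbers x and y and all real numbers r, s, the function t ↦ ln H_{r,s;x,y}(t) is concave on the interval (-(r+s)/2, ∞); that is, H_{r,s;x,y} is logarithmically concave on (-(r+s)/2, ∞). -/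
/-- The derivative is nonincreasing on the ray because its denominator is, up to a constant, half of
`cosh (d * (2 * t + r + s))`, whose argument has nondecreasing absolute value there. -/
theorem concaveOn_of_hasDerivAt_div_cosh {F : ℝ → ℝ} {K d r s : ℝ} (hK : 0 ≤ K)
    (hF : ∀ t, HasDerivAt F (K / (Real.cosh (d * (r + t)) * Real.cosh (d * (s + t)))) t) :
    ConcaveOn ℝ (Set.Ioi (-(r + s) / 2)) F := by
  have hd : Differentiable ℝ F := fun t => (hF t).differentiableAt
  refine AntitoneOn.concaveOn_of_deriv (convex_Ioi _) hd.continuous.continuousOn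
    hd.differentiableOn ?_
  rw [interior_Ioi]
  intro t ht u hu htu
  rw [Set.mem_Ioi] at ht hu
  rw [(hF t).deriv, (hF u).deriv]
  have key : ∀ v, Real.cosh (d * (r + v)) * Real.cosh (d * (s + v))
      = (Real.cosh (d * (2 * v + r + s)) + Real.cosh (d * (s - r))) / 2 := by
    intro v
    have h1 : d * (2 * v + r + s) = d * (s + v) + d * (r + v) := by ring
    have h2 : d * (s - r) = d * (s + v) - d * (r + v) := by ring
    rw [h1, h2, Real.cosh_add, Real.cosh_sub]
    ring
  have hmono : Real.cosh (d * (2 * t + r + s)) ≤ Real.cosh (d * (2 * u + r + s)) := by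
    rw [Real.cosh_le_cosh, abs_mul, abs_mul, abs_of_pos (by linarith : 0 < 2 * t + r + s),
      abs_of_pos (by linarith : 0 < 2 * u + r + s)]
    gcongr
  refine div_le_div_of_nonneg_left hK
    (mul_pos (Real.cosh_pos _) (Real.cosh_pos _)) ?_
  rw [key, key]
  linarith

theorem exp_rpow_add_exp_rpow (m d u : ℝ) :
    Real.exp (m + d) ^ u + Real.exp (m - d) ^ u
      = 2 * Real.exp (m * u) * Real.cosh (d * u) := by
  rw [← Real.exp_mul, ← Real.exp_mul, Real.cosh_eq, add_mul, sub_mul, sub_eq_add_neg,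
    Real.exp_add, Real.exp_add]
  ring

/-- On the diagonal, `log (gini u u x y)` is the derivative in `u` of
`log (exp (m * u) * cosh (d * u))`. -/
theorem log_gini_exp_self (m d u : ℝ) :
    Real.log (gini u u (Real.exp (m + d)) (Real.exp (m - d)))
      = m + d * (Real.sinh (d * u) / Real.cosh (d * u)) := by
  have hc := (Real.cosh_pos (d * u)).ne'
  have he := (Real.exp_pos (m * u)).ne'
  have hnum : Real.exp (m + d) ^ u * (m + d) + Real.exp (m - d) ^ u * (m - d)
      = 2 * Real.exp (m * u) * (m * Real.cosh (d * u) + d * Real.sinh (d * u)) := by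
    rw [← Real.exp_mul, ← Real.exp_mul, Real.cosh_eq, Real.sinh_eq, add_mul m d u, sub_mul m d u,
      sub_eq_add_neg (m * u), Real.exp_add, Real.exp_add]
    ring
  rw [gini, if_pos rfl, Real.log_exp, Real.log_exp, Real.log_exp, exp_rpow_add_exp_rpow, hnum]
  field_simp

theorem log_gini_exp_of_ne (m d : ℝ) {p q : ℝ} (h : p ≠ q) :
    Real.log (gini p q (Real.exp (m + d)) (Real.exp (m - d)))
      = m + (Real.log (Real.cosh (d * q)) - Real.log (Real.cosh (d * p))) / (q - p) := by
  have hlog : ∀ u, Real.log (Real.exp (m + d) ^ u + Real.exp (m - d) ^ u)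
      = Real.log 2 + m * u + Real.log (Real.cosh (d * u)) := by
    intro u
    rw [exp_rpow_add_exp_rpow, Real.log_mul (by positivity) (Real.cosh_pos _).ne',
      Real.log_mul (by norm_num) (Real.exp_pos _).ne', Real.log_exp]
  have hqp : q - p ≠ 0 := sub_ne_zero.mpr h.symm
  rw [gini, if_neg h, Real.log_rpow (by positivity), Real.log_div (by positivity) (by positivity),
    hlog, hlog]
  field_simp
  ring

/-- The constant `K` of the case `r ≠ s`, with `w = s - r`, is nonnegative: `d * w` and
`sinh (d * w)` have the same sign. -/
theorem mul_sinh_mul_div_nonneg (d w : ℝ) : 0 ≤ d * Real.sinh (d * w) / w := by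
  have h : 0 ≤ (d * w) * Real.sinh (d * w) := by
    rcases le_total 0 (d * w) with h | h
    · exact mul_nonneg h (Real.sinh_nonneg_iff.mpr h)
    · exact mul_nonneg_of_nonpos_of_nonpos h (Real.sinh_nonpos_iff.mpr h)
  have e : d * Real.sinh (d * w) / w = (d * w) * Real.sinh (d * w) / w ^ 2 := by
    rcases eq_or_ne w 0 with rfl | hw
    · simp
    · field_simp
  rw [e]
  positivity

theorem giniH_log_concaveOn (x y : ℝ) (hx : 0 < x) (hy : 0 < y) (r s : ℝ) :
    ConcaveOn ℝ (Set.Ioi (-(r + s) / 2)) (fun t : ℝ => Real.log (giniH r s x y t)) := by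
  -- `m` and `d` are the half-sum and half-difference of `log x` and `log y`.
  obtain ⟨m, d, rfl, rfl⟩ : ∃ m d, x = Real.exp (m + d) ∧ y = Real.exp (m - d) := by
    refine ⟨(Real.log x + Real.log y) / 2, (Real.log x - Real.log y) / 2, ?_, ?_⟩
    · ring_nf
      exact (Real.exp_log hx).symm
    · ring_nf
      exact (Real.exp_log hy).symm
  have hlin : ∀ c t : ℝ, HasDerivAt (fun t => d * (c + t)) d t := fun c t => by
    simpa using ((hasDerivAt_id t).const_add c).const_mul d
  rcases eq_or_ne r s with rfl | h
  · simp only [giniH, log_gini_exp_self]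
    refine concaveOn_of_hasDerivAt_div_cosh (K := d ^ 2) (d := d) (sq_nonneg d) fun t => ?_
    have hc := (Real.cosh_pos (d * (r + t))).ne'
    refine ((((hlin r t).sinh.div (hlin r t).cosh hc).const_mul d).const_add m).congr_deriv ?_
    have := Real.cosh_sq (d * (r + t))
    field_simp
    linear_combination d ^ 2 * this
  · have hne : ∀ t, r + t ≠ s + t := fun t => by simpa using h
    have hsr : s - r ≠ 0 := sub_ne_zero.mpr h.symm
    simp only [giniH, log_gini_exp_of_ne m d (hne _), add_sub_add_right_eq_sub]
    refine concaveOn_of_hasDerivAt_div_cosh (d := d)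
      (mul_sinh_mul_div_nonneg d (s - r)) fun t => ?_
    have hcr := (Real.cosh_pos (d * (r + t))).ne'
    have hcs := (Real.cosh_pos (d * (s + t))).ne'
    refine (((((hlin s t).cosh.log hcs).sub ((hlin r t).cosh.log hcr)).div_const
      (s - r)).const_add m).congr_deriv ?_
    have e : d * (s - r) = d * (s + t) - d * (r + t) := by ring
    rw [e, Real.sinh_sub]
    field_simp
end

section
/- For all positive real numbers x and y and all real numbers r, s with r + s > 0, the function t ↦ t · ln H_{r,s;x,y}(t) is convex on the interval (-(r+s)/2, 0). -/
/-- The convexity argument, in a form that covers both `r = s` and `r ≠ s`. -/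
lemma convexOn_mul_add_of_hasDerivAt {φ : ℝ → ℝ} {A b C K p : ℝ} (hC : 0 ≤ C) (hK : 0 < K)
    (hφ : ∀ v, HasDerivAt φ (C / (Real.cosh (2 * b * v) + K)) v) :
    ConvexOn ℝ (Set.Ioo (-p) 0) (fun t => t * (A + φ (p + t))) := by
  have hpos : ∀ v, 0 < Real.cosh (2 * b * v) + K := fun v => by
    have := Real.cosh_pos (2 * b * v)
    linarith
  have hderiv : deriv φ = fun v => C / (Real.cosh (2 * b * v) + K) :=
    funext fun v => (hφ v).deriv
  have hdiff : Differentiable ℝ φ := fun v => (hφ v).differentiableAt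
  have hmono : Monotone φ := monotone_of_deriv_nonneg hdiff fun v => by
    rw [hderiv]
    exact div_nonneg hC (hpos v).le
  have hconc : ConcaveOn ℝ (Set.Ici 0) φ := by
    refine AntitoneOn.concaveOn_of_deriv (convex_Ici 0) hdiff.continuous.continuousOn
      hdiff.differentiableOn ?_
    rw [hderiv, interior_Ici]
    intro u hu v hv huv
    simp only [Set.mem_Ioi] at hu hv
    refine div_le_div_of_nonneg_left hC (hpos u) ?_
    have : Real.cosh (2 * b * u) ≤ Real.cosh (2 * b * v) := by
      rw [Real.cosh_le_cosh, abs_mul, abs_mul (2 * b) v, abs_of_pos hu, abs_of_pos hv]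
      gcongr
    linarith
  refine ⟨convex_Ioo _ _, fun t₁ h₁ t₂ h₂ α β hα hβ hαβ => ?_⟩
  obtain ⟨h₁, h₁'⟩ := h₁
  obtain ⟨h₂, h₂'⟩ := h₂
  have hc := hconc.2 (x := p + t₁) (y := p + t₂) (by simp; linarith) (by simp; linarith)
    hα hβ hαβ
  have harg : α • (p + t₁) + β • (p + t₂) = p + (α • t₁ + β • t₂) := by
    simp only [smul_eq_mul]
    linear_combination p * hαβ
  rw [harg] at hc
  simp only [smul_eq_mul] at hc ⊢
  have hneg : α * t₁ + β * t₂ ≤ 0 := by nlinarith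
  have hcov : 0 ≤ (t₁ - t₂) * (φ (p + t₁) - φ (p + t₂)) := by
    rcases le_total t₁ t₂ with h | h
    · exact mul_nonneg_of_nonpos_of_nonpos (by linarith)
        (sub_nonpos.2 (hmono (by linarith)))
    · exact mul_nonneg (by linarith) (sub_nonneg.2 (hmono (by linarith)))
  -- The defect `α t₁ φ₁ + β t₂ φ₂ - (α t₁ + β t₂) (α φ₁ + β φ₂)` equals
  -- `α β (t₁ - t₂) (φ₁ - φ₂)`, where `φᵢ = φ (p + tᵢ)`.
  have hprod := mul_le_mul_of_nonpos_left hc hneg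
  have hab := mul_nonneg (mul_nonneg hα hβ) hcov
  obtain rfl : β = 1 - α := by linarith
  nlinarith

lemma rpow_add_rpow_eq_exp_mul_cosh {x y : ℝ} (hx : 0 < x) (hy : 0 < y) (u : ℝ) :
    x ^ u + y ^ u = 2 * (Real.exp ((Real.log x + Real.log y) / 2 * u) *
      Real.cosh ((Real.log x - Real.log y) / 2 * u)) := by
  rw [Real.rpow_def_of_pos hx, Real.rpow_def_of_pos hy, Real.cosh_eq]
  have h₁ : Real.log x * u =
      (Real.log x + Real.log y) / 2 * u + (Real.log x - Real.log y) / 2 * u := by ring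
  have h₂ : Real.log y * u =
      (Real.log x + Real.log y) / 2 * u + -((Real.log x - Real.log y) / 2 * u) := by ring
  rw [h₁, h₂, Real.exp_add, Real.exp_add]
  ring

lemma log_gini_self {x y : ℝ} (hx : 0 < x) (hy : 0 < y) (u : ℝ) :
    Real.log (gini u u x y) = (Real.log x + Real.log y) / 2 +
      (Real.log x - Real.log y) / 2 * (Real.sinh ((Real.log x - Real.log y) / 2 * u) /
        Real.cosh ((Real.log x - Real.log y) / 2 * u)) := by
  have hd : x ^ u - y ^ u = 2 * (Real.exp ((Real.log x + Real.log y) / 2 * u) *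
      Real.sinh ((Real.log x - Real.log y) / 2 * u)) := by
    rw [Real.rpow_def_of_pos hx, Real.rpow_def_of_pos hy, Real.sinh_eq]
    have h₁ : Real.log x * u =
        (Real.log x + Real.log y) / 2 * u + (Real.log x - Real.log y) / 2 * u := by ring
    have h₂ : Real.log y * u =
        (Real.log x + Real.log y) / 2 * u + -((Real.log x - Real.log y) / 2 * u) := by ring
    rw [h₁, h₂, Real.exp_add, Real.exp_add]
    ring
  have hs := rpow_add_rpow_eq_exp_mul_cosh hx hy u
  have hn : x ^ u * Real.log x + y ^ u * Real.log y =
      (x ^ u + y ^ u) * ((Real.log x + Real.log y) / 2) +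
        (x ^ u - y ^ u) * ((Real.log x - Real.log y) / 2) := by ring
  have he := Real.exp_ne_zero ((Real.log x + Real.log y) / 2 * u)
  have hc := (Real.cosh_pos ((Real.log x - Real.log y) / 2 * u)).ne'
  rw [gini, if_pos rfl, Real.log_exp, hn, hd, hs]
  field_simp

lemma log_gini_of_ne {x y : ℝ} (hx : 0 < x) (hy : 0 < y) {u v : ℝ} (huv : u ≠ v) :
    Real.log (gini u v x y) = (Real.log x + Real.log y) / 2 +
      (Real.log (Real.cosh ((Real.log x - Real.log y) / 2 * v)) -
        Real.log (Real.cosh ((Real.log x - Real.log y) / 2 * u))) / (v - u) := by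
  have hlog : ∀ w, Real.log (x ^ w + y ^ w) = Real.log 2 +
      ((Real.log x + Real.log y) / 2 * w +
        Real.log (Real.cosh ((Real.log x - Real.log y) / 2 * w))) := fun w => by
    rw [rpow_add_rpow_eq_exp_mul_cosh hx hy,
      Real.log_mul two_ne_zero (mul_ne_zero (Real.exp_ne_zero _) (Real.cosh_pos _).ne'),
      Real.log_mul (Real.exp_ne_zero _) (Real.cosh_pos _).ne', Real.log_exp]
  have hp : ∀ w : ℝ, 0 < x ^ w + y ^ w := fun w => by positivity
  have hne : v - u ≠ 0 := sub_ne_zero.2 huv.symm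
  rw [gini, if_neg huv, Real.log_rpow (div_pos (hp _) (hp _)),
    Real.log_div (hp _).ne' (hp _).ne', hlog, hlog]
  field_simp
  ring

lemma hasDerivAt_mul_sinh_div_cosh (b v : ℝ) :
    HasDerivAt (fun v => b * (Real.sinh (b * v) / Real.cosh (b * v)))
      (2 * b ^ 2 / (Real.cosh (2 * b * v) + 1)) v := by
  have hl : HasDerivAt (fun v => b * v) b v := by simpa using (hasDerivAt_id v).const_mul b
  have hc := (Real.cosh_pos (b * v)).ne'
  refine ((hl.sinh.div hl.cosh hc).const_mul b).congr_deriv ?_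
  have h2 : Real.cosh (2 * b * v) + 1 = 2 * Real.cosh (b * v) ^ 2 := by
    rw [mul_assoc, Real.cosh_two_mul, Real.sinh_sq]
    ring
  have h1 := Real.cosh_sq (b * v)
  rw [h2]
  field_simp
  linear_combination b ^ 2 * h1

/-- Here `d` is half the distance between the two parameters of the Gini mean. -/
lemma hasDerivAt_log_cosh_sub (b v : ℝ) {d : ℝ} (hd : d ≠ 0) :
    HasDerivAt (fun v => (Real.log (Real.cosh (b * (v + d))) -
        Real.log (Real.cosh (b * (v - d)))) / (2 * d))
      (b * Real.sinh (2 * b * d) / d / (Real.cosh (2 * b * v) + Real.cosh (2 * b * d))) v := by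
  have hl₁ : HasDerivAt (fun v => b * (v + d)) b v := by
    simpa using ((hasDerivAt_id v).add_const d).const_mul b
  have hl₂ : HasDerivAt (fun v => b * (v - d)) b v := by
    simpa using ((hasDerivAt_id v).sub_const d).const_mul b
  have hc₁ := (Real.cosh_pos (b * (v + d))).ne'
  have hc₂ := (Real.cosh_pos (b * (v - d))).ne'
  refine (((hl₁.cosh.log hc₁).sub (hl₂.cosh.log hc₂)).div_const (2 * d)).congr_deriv ?_
  have hs : Real.sinh (2 * b * d) = Real.sinh (b * (v + d)) * Real.cosh (b * (v - d)) -
      Real.cosh (b * (v + d)) * Real.sinh (b * (v - d)) := by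
    rw [← Real.sinh_sub]
    ring_nf
  have hk : Real.cosh (2 * b * v) + Real.cosh (2 * b * d) =
      2 * (Real.cosh (b * (v + d)) * Real.cosh (b * (v - d))) := by
    have h₁ : 2 * b * v = b * (v + d) + b * (v - d) := by ring
    have h₂ : 2 * b * d = b * (v + d) - b * (v - d) := by ring
    rw [h₁, h₂, Real.cosh_add, Real.cosh_sub]
    ring
  rw [hs, hk]
  field_simp

lemma mul_sinh_div_nonneg (b d : ℝ) : 0 ≤ b * Real.sinh (2 * b * d) / d := by
  have h : 0 ≤ (b * d) * Real.sinh (2 * b * d) := by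
    rcases le_total 0 (b * d) with h | h
    · exact mul_nonneg h (Real.sinh_nonneg_iff.2 (by linarith))
    · exact mul_nonneg_of_nonpos_of_nonpos h (Real.sinh_nonpos_iff.2 (by linarith))
  have he : b * Real.sinh (2 * b * d) / d = (b * d) * Real.sinh (2 * b * d) / d ^ 2 := by
    rcases eq_or_ne d 0 with rfl | hd
    · simp
    · field_simp
  rw [he]
  positivity

theorem mul_log_giniH_convexOn_of_pos (x y : ℝ) (hx : 0 < x) (hy : 0 < y) (r s : ℝ)
    (hrs : 0 < r + s) :
    ConvexOn ℝ (Set.Ioo (-(r + s) / 2) 0)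
      (fun t : ℝ => t * Real.log (giniH r s x y t)) := by
  have hset : -(r + s) / 2 = -((r + s) / 2) := by ring
  rw [hset]
  rcases eq_or_ne r s with rfl | hne
  · have key := convexOn_mul_add_of_hasDerivAt (A := (Real.log x + Real.log y) / 2)
      (p := (r + r) / 2) (by positivity) one_pos
      (hasDerivAt_mul_sinh_div_cosh ((Real.log x - Real.log y) / 2))
    refine key.congr fun t _ => ?_
    simp only [giniH]
    rw [log_gini_self hx hy, add_self_div_two]
  · have hd : (s - r) / 2 ≠ 0 := div_ne_zero (sub_ne_zero.2 hne.symm) two_ne_zero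
    have key := convexOn_mul_add_of_hasDerivAt (A := (Real.log x + Real.log y) / 2)
      (p := (r + s) / 2) (mul_sinh_div_nonneg ((Real.log x - Real.log y) / 2) ((s - r) / 2))
      (Real.cosh_pos _)
      (fun v => hasDerivAt_log_cosh_sub ((Real.log x - Real.log y) / 2) v hd)
    refine key.congr fun t _ => ?_
    have h₁ : (r + s) / 2 + t + (s - r) / 2 = s + t := by ring
    have h₂ : (r + s) / 2 + t - (s - r) / 2 = r + t := by ring
    have h₃ : 2 * ((s - r) / 2) = s + t - (r + t) := by ring
    simp only [giniH]
    rw [log_gini_of_ne hx hy (by simpa using hne), h₁, h₂, h₃]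
end

section
/- For all positive real numbers x and y and all real numbers r, s with r + s < 0, the function t ↦ t · ln H_{r,s;x,y}(t) is convex on the interval (0, -(r+s)/2). -/
/-- The function `u ↦ log (x ^ u + y ^ u)`. -/
noncomputable def logPowSum (x y u : ℝ) : ℝ := Real.log (x ^ u + y ^ u)

/-- The first derivative of `logPowSum`, which is also the logarithm of `gini u u x y`. -/
noncomputable def logPowSum' (x y u : ℝ) : ℝ :=
  (x ^ u * Real.log x + y ^ u * Real.log y) / (x ^ u + y ^ u)

/-- The second derivative of `logPowSum`, in a form showing that it is even and decreasing
in `|u|`. -/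
noncomputable def logPowSum'' (x y u : ℝ) : ℝ :=
  (Real.log x - Real.log y) ^ 2 / (2 + 2 * Real.cosh ((Real.log x - Real.log y) * u))

lemma hasDerivAt_logPowSum {x y : ℝ} (hx : 0 < x) (hy : 0 < y) (u : ℝ) :
    HasDerivAt (logPowSum x y) (logPowSum' x y u) u := by
  have hX := Real.hasStrictDerivAt_const_rpow hx u |>.hasDerivAt
  have hY := Real.hasStrictDerivAt_const_rpow hy u |>.hasDerivAt
  have : 0 < x ^ u + y ^ u := by positivity
  exact (hX.add hY).log this.ne'

lemma hasDerivAt_logPowSum' {x y : ℝ} (hx : 0 < x) (hy : 0 < y) (u : ℝ) :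
    HasDerivAt (logPowSum' x y) (logPowSum'' x y u) u := by
  have hX := Real.hasStrictDerivAt_const_rpow hx u |>.hasDerivAt
  have hY := Real.hasStrictDerivAt_const_rpow hy u |>.hasDerivAt
  have hA : 0 < x ^ u := Real.rpow_pos_of_pos hx u
  have hB : 0 < y ^ u := Real.rpow_pos_of_pos hy u
  refine (((hX.mul_const (Real.log x)).add (hY.mul_const (Real.log y))).div (hX.add hY)
    (add_pos hA hB).ne').congr_deriv ?_
  have h1 : Real.exp ((Real.log x - Real.log y) * u) = x ^ u / y ^ u := by
    rw [Real.rpow_def_of_pos hx, Real.rpow_def_of_pos hy, ← Real.exp_sub]; ring_nf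
  have h2 : Real.exp (-((Real.log x - Real.log y) * u)) = y ^ u / x ^ u := by
    rw [Real.exp_neg, h1, inv_div]
  simp only [logPowSum'', Pi.add_apply]
  rw [Real.cosh_eq, h1, h2]
  generalize x ^ u = A at *
  generalize y ^ u = B at *
  have h3 : 2 + 2 * ((A / B + B / A) / 2) = (A + B) ^ 2 / (A * B) := by
    field_simp; ring
  rw [h3]
  field_simp
  ring

lemma logPowSum''_nonneg (x y u : ℝ) : 0 ≤ logPowSum'' x y u := by
  have := Real.cosh_pos ((Real.log x - Real.log y) * u)
  unfold logPowSum''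
  positivity

lemma logPowSum''_le_of_abs_le (x y : ℝ) {u v : ℝ} (h : |v| ≤ |u|) :
    logPowSum'' x y u ≤ logPowSum'' x y v := by
  have := Real.cosh_pos ((Real.log x - Real.log y) * v)
  have : Real.cosh ((Real.log x - Real.log y) * v) ≤ Real.cosh ((Real.log x - Real.log y) * u) := by
    rw [Real.cosh_le_cosh, abs_mul, abs_mul]
    gcongr
  unfold logPowSum''
  gcongr

/-- The third derivative of `logPowSum` exists, and it is nonnegative on the negative half-line
because the second derivative is increasing there. -/
lemma exists_hasDerivAt_logPowSum'' (x y u : ℝ) :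
    ∃ c, HasDerivAt (logPowSum'' x y) c u ∧ (u < 0 → 0 ≤ c) := by
  have hc := Real.cosh_pos ((Real.log x - Real.log y) * u)
  have hd : DifferentiableAt ℝ (logPowSum'' x y) u := by
    unfold logPowSum''
    refine DifferentiableAt.div (by fun_prop) (by fun_prop) (by positivity)
  refine ⟨_, hd.hasDerivAt, fun hu => ?_⟩
  have hmono : MonotoneOn (logPowSum'' x y) (Set.Iio 0) := fun a (ha : a < 0) b (hb : b < 0) hab =>
    logPowSum''_le_of_abs_le x y (by
      rwa [abs_of_neg ha, abs_of_neg hb, neg_le_neg_iff])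
  rw [← derivWithin_of_isOpen isOpen_Iio hu]
  exact hmono.derivWithin_nonneg

/-- If `L` has nonnegative first and second derivatives on `(0, b)`, then `t ↦ t * L t` is convex
there. -/
lemma convexOn_id_mul {b : ℝ} {L L' L'' : ℝ → ℝ}
    (h1 : ∀ t ∈ Set.Ioo 0 b, HasDerivAt L (L' t) t)
    (h2 : ∀ t ∈ Set.Ioo 0 b, HasDerivAt L' (L'' t) t)
    (h1n : ∀ t ∈ Set.Ioo 0 b, 0 ≤ L' t) (h2n : ∀ t ∈ Set.Ioo 0 b, 0 ≤ L'' t) :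
    ConvexOn ℝ (Set.Ioo 0 b) (fun t => t * L t) := by
  have d1 : ∀ t ∈ Set.Ioo 0 b, HasDerivAt (fun t => t * L t) (L t + t * L' t) t := fun t ht =>
    ((hasDerivAt_id t).mul (h1 t ht)).congr_deriv (by simp)
  have d2 : ∀ t ∈ Set.Ioo 0 b,
      HasDerivAt (fun t => L t + t * L' t) (2 * L' t + t * L'' t) t := fun t ht =>
    ((h1 t ht).add ((hasDerivAt_id t).mul (h2 t ht))).congr_deriv (by simp; ring)
  refine convexOn_of_hasDerivWithinAt2_nonneg (f' := fun t => L t + t * L' t)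
    (f'' := fun t => 2 * L' t + t * L'' t) (convex_Ioo 0 b)
    (fun t ht => (d1 t ht).continuousAt.continuousWithinAt) ?_ ?_ ?_
  all_goals rw [interior_Ioo]; intro t ht
  · exact (d1 t ht).hasDerivWithinAt
  · exact (d2 t ht).hasDerivWithinAt
  · have := h1n t ht
    have := mul_nonneg ht.1.le (h2n t ht)
    linarith

lemma log_giniH_self (r x y t : ℝ) :
    Real.log (giniH r r x y t) = logPowSum' x y (r + t) := by
  simp [giniH, gini, logPowSum']

lemma log_giniH_of_ne {x y : ℝ} (hx : 0 < x) (hy : 0 < y) {r s : ℝ} (h : r ≠ s) (t : ℝ) :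
    Real.log (giniH r s x y t) =
      (logPowSum x y (s + t) - logPowSum x y (r + t)) / (s - r) := by
  have h' : r + t ≠ s + t := fun e => h (by linarith)
  have hs : 0 < x ^ (s + t) + y ^ (s + t) := by positivity
  have hr : 0 < x ^ (r + t) + y ^ (r + t) := by positivity
  rw [giniH, gini, if_neg h', Real.log_rpow (by positivity), Real.log_div hs.ne' hr.ne',
    logPowSum, logPowSum, add_sub_add_right_eq_sub]
  ring

lemma giniH_convex_of_lt {x y : ℝ} (hx : 0 < x) (hy : 0 < y) {r s : ℝ} (h : r < s) :
    ConvexOn ℝ (Set.Ioo 0 (-(r + s) / 2))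
      (fun t : ℝ => t * ((logPowSum x y (s + t) - logPowSum x y (r + t)) / (s - r))) := by
  have hsr : 0 ≤ s - r := by linarith
  refine convexOn_id_mul
    (L' := fun t => (logPowSum' x y (s + t) - logPowSum' x y (r + t)) / (s - r))
    (L'' := fun t => (logPowSum'' x y (s + t) - logPowSum'' x y (r + t)) / (s - r)) ?_ ?_ ?_ ?_
  · exact fun t _ => (((hasDerivAt_logPowSum hx hy _).comp_const_add s t).sub
      ((hasDerivAt_logPowSum hx hy _).comp_const_add r t)).div_const _
  · exact fun t _ => (((hasDerivAt_logPowSum' hx hy _).comp_const_add s t).sub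
      ((hasDerivAt_logPowSum' hx hy _).comp_const_add r t)).div_const _
  · intro t _
    have hm : Monotone (logPowSum' x y) :=
      monotone_of_hasDerivAt_nonneg (hasDerivAt_logPowSum' hx hy)
        (fun u => logPowSum''_nonneg x y u)
    exact div_nonneg (sub_nonneg.2 (hm (by linarith))) hsr
  · intro t ht
    refine div_nonneg (sub_nonneg.2 (logPowSum''_le_of_abs_le x y ?_)) hsr
    have := ht.2
    rw [abs_of_neg (show r + t < 0 by linarith), abs_le]
    constructor <;> linarith

theorem mul_log_giniH_convexOn_of_neg (x y : ℝ) (hx : 0 < x) (hy : 0 < y) (r s : ℝ)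
    (hrs : r + s < 0) :
    ConvexOn ℝ (Set.Ioo 0 (-(r + s) / 2))
      (fun t : ℝ => t * Real.log (giniH r s x y t)) := by
  rcases lt_trichotomy r s with h | rfl | h
  · simp only [log_giniH_of_ne hx hy h.ne]
    exact giniH_convex_of_lt hx hy h
  · simp only [log_giniH_self]
    choose c hc hc0 using exists_hasDerivAt_logPowSum'' x y
    refine convexOn_id_mul (L' := fun t => logPowSum'' x y (r + t)) (L'' := fun t => c (r + t))
      (fun t _ => (hasDerivAt_logPowSum' hx hy _).comp_const_add r t)
      (fun t _ => (hc _).comp_const_add r t) (fun t _ => logPowSum''_nonneg x y _)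
      (fun t ht => hc0 _ ?_)
    have := ht.2
    linarith
  -- The difference quotient is symmetric in `r` and `s`.
  · have e : ∀ t, Real.log (giniH r s x y t) =
        (logPowSum x y (r + t) - logPowSum x y (s + t)) / (r - s) := fun t => by
      rw [log_giniH_of_ne hx hy h.ne', ← neg_sub, ← neg_sub r s, neg_div_neg_eq]
    simp only [e]
    rw [add_comm r s]
    exact giniH_convex_of_lt hx hy h
end
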